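/- There exists a Hausdorff topological semilattice E that is 𝓗-complete but not 𝓐𝓗-complete: E is closed in every Hausdorff topological semilattice into which it topologically embeds, yet E admits a continuous surjective semilattice homomorphism onto a dense non-closed subsemilattice of some Hausdorff topological semilattice. -/

import Mathlib

open Topology Set

/-- A filter is free if the intersection of all its members is empty. -/
def FreeF (F : Filter ℕ) : Prop := ⋂₀ F.sets = ∅

/-- The topology on ℕ_ℱ = ℕ ∪ {ℱ} (modelled as `Option ℕ`, with `none` the point ℱ):
all points of ℕ are isolated, and the sets F ∪ {ℱ}, F ∈ ℱ, form a neighbourhood base at ℱ. -/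
def nfTop (F : Filter ℕ) : TopologicalSpace (Option ℕ) where
  IsOpen U := none ∈ U → {n : ℕ | some n ∈ U} ∈ F
  isOpen_univ := fun _ => by simp
  isOpen_inter := fun U V hU hV h => Filter.inter_mem (hU h.1) (hV h.2)
  isOpen_sUnion := fun S hS h => by
    obtain ⟨U, hUS, hnU⟩ := h
    exact Filter.mem_of_superset (hS U hUS hnU) fun n hn => ⟨U, hUS, hn⟩

/-- min on ℕ extended to ℕ_ℱ by min(n,ℱ) = n, min(ℱ,ℱ) = ℱ. -/
def minOp : Option ℕ → Option ℕ → Option ℕ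
  | none, y => y
  | some a, none => some a
  | some a, some b => some (min a b)

/-- max on ℕ extended to ℕ_ℱ by max(n,ℱ) = ℱ = max(ℱ,ℱ). -/
def maxOp : Option ℕ → Option ℕ → Option ℕ
  | none, _ => none
  | _, none => none
  | some a, some b => some (max a b)

/-- `X` with operation `op` is a (Hausdorff) topological semilattice. -/
structure IsTopSemilattice (X : Type*) [TopologicalSpace X] (op : X → X → X) : Prop where
  t2 : T2Space X
  comm : ∀ a b, op a b = op b a
  idem : ∀ a, op a a = a
  assoc : ∀ a b c, op (op a b) c = op a (op b c)
  cont : Continuous fun p : X × X => op p.1 p.2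

/-- 𝓗-completeness: the image under any topological embedding which is a semilattice
homomorphism into a Hausdorff topological semilattice is closed. -/
def HComplete (X : Type*) [TopologicalSpace X] (op : X → X → X) : Prop :=
  ∀ (Y : Type*) [TopologicalSpace Y] (opY : Y → Y → Y), IsTopSemilattice Y opY →
    ∀ f : X → Y, Topology.IsEmbedding f →
      (∀ a b, f (op a b) = opY (f a) (f b)) → IsClosed (Set.range f)

/-- 𝓐𝓗-completeness: the image under any continuous semilattice homomorphism
into a Hausdorff topological semilattice is closed. -/
def AHComplete (X : Type*) [TopologicalSpace X] (op : X → X → X) : Prop :=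
  ∀ (Y : Type*) [TopologicalSpace Y] (opY : Y → Y → Y), IsTopSemilattice Y opY →
    ∀ f : X → Y, Continuous f →
      (∀ a b, f (op a b) = opY (f a) (f b)) → IsClosed (Set.range f)


/-- The carrier: a chain `c n`, and two chains `a i n` with tops `inf i`, and a zero. -/
inductive XS : Type
  | zero : XS
  | c : ℕ → XS
  | a : Bool → ℕ → XS
  | inf : Bool → XS

namespace XS

/-- The semilattice operation. -/
def mu : XS → XS → XS
  | zero, _ => zero
  | c _, zero => zero
  | c m, c n => c (min m n)
  | c m, a i n => a i (min m n)
  | c m, inf i => a i m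
  | a _ _, zero => zero
  | a i m, c n => a i (min m n)
  | a i m, a j n => if i = j then a i (min m n) else zero
  | a i m, inf j => if i = j then a i m else zero
  | inf _, zero => zero
  | inf i, c n => a i n
  | inf i, a j n => if i = j then a i n else zero
  | inf i, inf j => if i = j then inf i else zero

/-- Basic neighbourhoods. -/
def near (x : XS) (N : ℕ) : Set XS :=
  {z | z = x ∨ ∃ i n, x = inf i ∧ z = a i n ∧ N ≤ n ∧ n.bodd = i}

theorem near_mono (x : XS) {M N : ℕ} (h : M ≤ N) : near x N ⊆ near x M := by
  rintro z (h1 | ⟨i, n, h1, h2, h3, h4⟩)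
  · exact Or.inl h1
  · exact Or.inr ⟨i, n, h1, h2, h.trans h3, h4⟩

instance topXS : TopologicalSpace XS where
  IsOpen U := ∀ x ∈ U, ∃ N, near x N ⊆ U
  isOpen_univ := fun _ _ => ⟨0, subset_univ _⟩
  isOpen_inter := fun U V hU hV x hx => by
    obtain ⟨N, hN⟩ := hU x hx.1
    obtain ⟨M, hM⟩ := hV x hx.2
    exact ⟨max N M, subset_inter ((near_mono x (le_max_left _ _)).trans hN)
      ((near_mono x (le_max_right _ _)).trans hM)⟩
  isOpen_sUnion := fun S hS x hx => by
    obtain ⟨U, hU, hxU⟩ := hx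
    obtain ⟨N, hN⟩ := hS U hU x hxU
    exact ⟨N, hN.trans (subset_sUnion_of_mem hU)⟩

theorem isOpen_def (U : Set XS) : IsOpen U ↔ ∀ x ∈ U, ∃ N, near x N ⊆ U := Iff.rfl

theorem isOpen_near (x : XS) (N : ℕ) : IsOpen (near x N) := by
  rw [isOpen_def]
  rintro z (rfl | ⟨i, n, h1, rfl, h3, h4⟩)
  · exact ⟨N, le_rfl⟩
  · refine ⟨0, ?_⟩
    rintro w (rfl | ⟨j, k, h, _⟩)
    · exact Or.inr ⟨i, n, h1, rfl, h3, h4⟩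
    · cases h

theorem self_mem_near (x : XS) (N : ℕ) : x ∈ near x N := Or.inl rfl

theorem near_mem (x : XS) (N : ℕ) : near x N ∈ 𝓝 x :=
  (isOpen_near x N).mem_nhds (self_mem_near x N)

theorem mem_nhds (x : XS) (U : Set XS) : U ∈ 𝓝 x ↔ ∃ N, near x N ⊆ U := by
  constructor
  · intro h
    obtain ⟨V, hVU, hV, hx⟩ := mem_nhds_iff.1 h
    obtain ⟨N, hN⟩ := hV x hx
    exact ⟨N, hN.trans hVU⟩
  · rintro ⟨N, hN⟩
    exact Filter.mem_of_superset (near_mem x N) hN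

/-- The finite level of a point. -/
def lev : XS → ℕ
  | zero => 0
  | c n => n
  | a _ n => n
  | inf _ => 0

theorem t2 : T2Space XS := by
  refine ⟨fun x y hxy => ?_⟩
  refine ⟨near x (lev y + 1), near y (lev x + 1), isOpen_near _ _, isOpen_near _ _,
    self_mem_near _ _, self_mem_near _ _, ?_⟩
  rw [Set.disjoint_left]
  rintro z (h | ⟨i, n, h1, h2, h3, h4⟩) (h' | ⟨j, k, h1', h2', h3', h4'⟩)
  · exact hxy (h.symm.trans h')
  · subst h; subst h2'; simp [lev] at h3'
  · subst h'; subst h2; simp [lev] at h3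
  · subst h1; subst h1'; subst h2; cases h2'; exact hxy rfl

theorem mu_near (x y : XS) (N : ℕ) {x' y' : XS} (hx : x' ∈ near x (N + lev x + lev y))
    (hy : y' ∈ near y (N + lev x + lev y)) : mu x' y' ∈ near (mu x y) N := by
  rcases hx with rfl | ⟨i, n, rfl, rfl, h3, h4⟩ <;>
  rcases hy with rfl | ⟨j, k, rfl, rfl, h3', h4'⟩
  · exact self_mem_near _ _
  · cases x' <;> simp only [mu, near, lev, mem_ofPred_eq] at * <;> grind
  · cases y' <;> simp only [mu, near, lev, mem_ofPred_eq] at * <;> grind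
  · simp only [mu, near, lev, mem_ofPred_eq] at *; grind

theorem isTop : IsTopSemilattice XS mu where
  t2 := t2
  comm x y := by cases x <;> cases y <;> simp only [mu] <;> grind
  idem x := by cases x <;> simp [mu]
  assoc x y z := by
    cases x <;> cases y <;> cases z <;> simp only [mu] <;> grind [mu]
  cont := by
    rw [continuous_iff_continuousAt]
    rintro ⟨x, y⟩
    intro U hU
    obtain ⟨N, hN⟩ := (mem_nhds _ _).1 hU
    rw [Filter.mem_map, nhds_prod_eq]
    refine Filter.mem_of_superset (Filter.prod_mem_prod (near_mem x (N + lev x + lev y))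
      (near_mem y (N + lev x + lev y))) ?_
    rintro ⟨x', y'⟩ ⟨hx, hy⟩
    exact hN (mu_near x y N hx hy)

/-- The filter on `ℕ` along which `a i n` converges to `inf i`. -/
def seqp (i : Bool) (k : ℕ) : ℕ := 2 * k + i.toNat

theorem tendsto_seqp (i : Bool) :
    Filter.Tendsto (fun k => a i (seqp i k)) Filter.atTop (𝓝 (inf i)) := by
  intro U hU
  obtain ⟨N, hN⟩ := (mem_nhds _ _).1 hU
  rw [Filter.mem_map]
  filter_upwards [Filter.eventually_ge_atTop N] with k hk
  refine hN (Or.inr ⟨i, _, rfl, rfl, ?_, ?_⟩)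
  · unfold seqp; omega
  · unfold seqp; cases i <;> simp

theorem key {Y : Type*} [TopologicalSpace Y] {opY : Y → Y → Y} (hY : IsTopSemilattice Y opY)
    {f : XS → Y} (hf : Topology.IsEmbedding f) (hom : ∀ a b, f (mu a b) = opY (f a) (f b))
    {y : Y} {U : Filter XS} [U.NeBot] (hU : Filter.Tendsto f U (𝓝 y)) (i : Bool)
    (h : ∀ m, ∀ᶠ x in U, mu x (a i m) = a i m) :
    Filter.Tendsto (fun x => mu x (inf i)) U (𝓝 (inf i)) := by
  haveI := hY.t2
  have hmul : ∀ z, Filter.Tendsto (fun x => f (mu x z)) U (𝓝 (opY y (f z))) := by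
    intro z
    simp only [hom]
    exact (hY.cont.tendsto (y, f z)).comp (hU.prodMk_nhds tendsto_const_nhds)
  have h1 : ∀ m, opY y (f (a i m)) = f (a i m) := by
    intro m
    refine tendsto_nhds_unique (hmul (a i m)) ?_
    refine tendsto_const_nhds.congr' ?_
    filter_upwards [h m] with x hx
    rw [hx]
  have h2 : opY y (f (inf i)) = f (inf i) := by
    have t1 : Filter.Tendsto (fun k => f (a i (seqp i k))) Filter.atTop (𝓝 (f (inf i))) :=
      (hf.continuous.tendsto _).comp (tendsto_seqp i)
    have t2 : Filter.Tendsto (fun k => opY y (f (a i (seqp i k)))) Filter.atTop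
        (𝓝 (opY y (f (inf i)))) :=
      (hY.cont.tendsto (y, f (inf i))).comp (tendsto_const_nhds.prodMk_nhds t1)
    simp only [h1] at t2
    exact tendsto_nhds_unique t2 t1
  rw [hf.tendsto_nhds_iff]
  have := hmul (inf i)
  rw [h2] at this
  exact this

theorem hComplete : HComplete XS mu := by
  intro Y _ opY hY f hf hom
  haveI := hY.t2
  rw [← closure_subset_iff_isClosed]
  intro y hy
  by_contra hny
  haveI hne : (Filter.comap f (𝓝 y)).NeBot := by
    rw [Filter.comap_neBot_iff]
    intro t ht
    obtain ⟨_, h1, ⟨x, rfl⟩⟩ := mem_closure_iff_nhds.1 hy t ht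
    exact ⟨x, h1⟩
  let U : Ultrafilter XS := Ultrafilter.of (Filter.comap f (𝓝 y))
  have hU : Filter.Tendsto f U (𝓝 y) :=
    (Filter.tendsto_comap).mono_left (Ultrafilter.of_le _)
  have hfree : ∀ z, ∀ᶠ x in (U : Filter XS), x ≠ z := by
    intro z
    have : y ≠ f z := fun h => hny ⟨z, h.symm⟩
    filter_upwards [hU.eventually_ne this] with x hx h
    exact hx (by rw [h])
  have hfree' : ∀ (g : ℕ → XS) (m : ℕ), ∀ᶠ x in (U : Filter XS), ∀ k ∈ Set.Iio m, x ≠ g k := by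
    intro g m
    rw [Filter.eventually_all_finite (Set.finite_Iio m)]
    exact fun k _ => hfree _
  have hcov : ∀ᶠ x in (U : Filter XS),
      (∃ n, x = c n) ∨ ((∃ n, x = a true n) ∨ (∃ n, x = a false n)) := by
    filter_upwards [hfree zero, hfree (inf true), hfree (inf false)] with x h1 h2 h3
    cases x with
    | zero => exact absurd rfl h1
    | c n => exact Or.inl ⟨n, rfl⟩
    | a i n => cases i <;> simp
    | inf i => cases i <;> simp_all
  have hA : ∀ i, ¬ ∀ᶠ x in (U : Filter XS), ∃ n, x = a i n := by
    intro i hi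
    have ht := key hY hf hom hU i (by
      intro m
      filter_upwards [hi, hfree' (a i) m] with x hx hx2
      obtain ⟨n, rfl⟩ := hx
      have : m ≤ n := by
        by_contra hlt
        exact hx2 n (not_le.1 hlt) rfl
      simp [mu, this])
    have ht' : Filter.Tendsto id (U : Filter XS) (𝓝 (inf i)) := by
      refine ht.congr' ?_
      filter_upwards [hi] with x hx
      obtain ⟨n, rfl⟩ := hx
      simp [mu]
    have := tendsto_nhds_unique ((hf.continuous.tendsto _).comp ht') hU
    exact hny ⟨_, this⟩
  rw [Ultrafilter.eventually_or, Ultrafilter.eventually_or] at hcov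
  rcases hcov with hc | hc | hc
  · have ht : ∀ i, Filter.Tendsto (fun x => mu x (inf i)) U (𝓝 (inf i)) := by
      intro i
      refine key hY hf hom hU i ?_
      intro m
      filter_upwards [hc, hfree' c m] with x hx hx2
      obtain ⟨n, rfl⟩ := hx
      have : m ≤ n := by
        by_contra hlt
        exact hx2 n (not_le.1 hlt) rfl
      simp [mu, this]
    have hp : ∀ i, ∀ᶠ x in (U : Filter XS), ∃ n, x = c n ∧ n.bodd = i := by
      intro i
      filter_upwards [hc, (ht i) (near_mem (inf i) 0)] with x hx hx2
      obtain ⟨n, rfl⟩ := hx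
      refine ⟨n, rfl, ?_⟩
      rcases hx2 with h | ⟨j, k, h1, h2, _, h4⟩
      · cases h
      · cases h1; cases h2; exact h4
    obtain ⟨x, ⟨n, h1, h2⟩, ⟨k, h3, h4⟩⟩ := ((hp true).and (hp false)).exists
    subst h1
    cases h3
    rw [h2] at h4
    cases h4
  · exact hA _ hc
  · exact hA _ hc

/-- The homomorphism onto a dense subsemilattice of `(ℕ∞, min)`. -/
def toE : XS → ℕ∞
  | c n => ((n + 1 : ℕ) : ℕ∞)
  | _ => 0

theorem continuous_toE : Continuous toE := by
  rw [continuous_iff_continuousAt]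
  intro x
  refine (tendsto_const_nhds (x := toE x)).congr' ?_
  filter_upwards [near_mem x 0] with z hz
  rcases hz with rfl | ⟨i, n, rfl, rfl, _⟩ <;> rfl

theorem mem_range_toE (n : ℕ) : (n : ℕ∞) ∈ Set.range toE := by
  cases n with
  | zero => exact ⟨zero, rfl⟩
  | succ n => exact ⟨c n, rfl⟩

theorem top_not_mem : ⊤ ∉ Set.range toE := by
  rintro ⟨x, hx⟩
  cases x with
  | c n => exact ENat.natCast_ne_top _ hx
  | _ => exact ENat.zero_ne_top hx

theorem dense_toE : DenseRange toE := by
  intro x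
  induction x using ENat.recTopCoe with
  | coe n => exact subset_closure (mem_range_toE n)
  | top =>
    rw [mem_closure_iff_nhds]
    intro t ht
    obtain ⟨l, hl, h⟩ := exists_Ioc_subset_of_mem_nhds ht ⟨0, ENat.top_pos⟩
    lift l to ℕ using hl.ne
    exact ⟨((l + 1 : ℕ) : ℕ∞), h ⟨by exact_mod_cast Nat.lt_succ_self l, le_top⟩,
      mem_range_toE _⟩

end XS

/-- there exists a Hausdorff topological semilattice which is 𝓗-complete
but not 𝓐𝓗-complete: it is closed in every Hausdorff topological semilattice into which
it topologically embeds, yet it admits a continuous surjective semilattice homomorphism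
onto a dense non-closed subsemilattice of some Hausdorff topological semilattice. -/
theorem exists_hComplete_not_ahComplete :
    ∃ (X : Type) (_ : TopologicalSpace X) (op : X → X → X),
      IsTopSemilattice X op ∧ HComplete X op ∧
      ∃ (Y : Type) (_ : TopologicalSpace Y) (opY : Y → Y → Y),
        IsTopSemilattice Y opY ∧
        ∃ f : X → Y, Continuous f ∧ (∀ a b, f (op a b) = opY (f a) (f b)) ∧
          DenseRange f ∧ ¬ IsClosed (Set.range f) := by
  refine ⟨XS, XS.topXS, XS.mu, XS.isTop, XS.hComplete, ℕ∞, inferInstance, min, ?_, XS.toE,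
    XS.continuous_toE, ?_, XS.dense_toE, ?_⟩
  · exact ⟨inferInstance, min_comm, min_self, min_assoc, continuous_min⟩
  · intro x y
    cases x <;> cases y <;> simp only [XS.mu, XS.toE] <;> (try split_ifs) <;>
      first
      | (rw [← Nat.add_min_add_right]; exact Nat.mono_cast.map_min)
      | simp [XS.toE]
  · intro hc
    have := XS.dense_toE.closure_range
    rw [hc.closure_eq] at this
    exact XS.top_not_mem (this ▸ mem_univ _)
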